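/- Let P be a polynomial over ℂ whose degree d satisfies d ≡ 2 (mod 4), and let w be a nonzero entire function satisfying w''(z) + P(z)·w(z) = 0 for all z ∈ ℂ such that all but finitely many zeros of w are real (i.e. the set {z : ℂ | w(z) = 0 and Im(z) ≠ 0} is finite). Then w has only finitely many zeros, i.e. the set {z : ℂ | w(z) = 0} is finite. -/

import Mathlib

open Complex Polynomial

lemma poly_bound (P : Polynomial ℂ) (hd : 1 ≤ P.natDegree) :
    ∃ C : ℝ, 0 ≤ C ∧ ∀ z : ℂ, 1 ≤ ‖z‖ →
      ‖P.eval z - P.leadingCoeff * z ^ P.natDegree‖ ≤ C * ‖z‖ ^ (P.natDegree - 1) := by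
  refine ⟨∑ i ∈ Finset.range P.natDegree, ‖P.coeff i‖,
    Finset.sum_nonneg (fun i _ => norm_nonneg _), fun z hz => ?_⟩
  rw [Polynomial.eval_eq_sum_range, Finset.sum_range_succ, Polynomial.coeff_natDegree,
    add_sub_cancel_right, Finset.sum_mul]
  refine (norm_sum_le _ _).trans (Finset.sum_le_sum fun i hi => ?_)
  rw [norm_mul, norm_pow]
  have := Finset.mem_range.1 hi
  exact mul_le_mul_of_nonneg_left (pow_le_pow_right₀ hz (by omega)) (norm_nonneg _)

lemma riccati_bound (u p : ℂ → ℂ) (U : Set ℂ) (c : ℂ) (r M : ℝ) (hr : 0 < r)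
    (hM : 0 ≤ M) (hsub : Metric.closedBall c r ⊆ U) (hu : DifferentiableOn ℂ u U)
    (hric : ∀ z ∈ Metric.closedBall c r, deriv u z + u z ^ 2 = - p z)
    (hp : ∀ z ∈ Metric.closedBall c r, ‖p z‖ ≤ M ^ 2) :
    ‖deriv u c‖ ≤ 4 * (4 + M * r) / r ^ 2 := by
  have hcont : ContinuousOn (fun z => ‖u z‖ * (r - dist z c)) (Metric.closedBall c r) := by
    have := hu.continuousOn.mono hsub
    fun_prop
  obtain ⟨z0, hz0, hmax⟩ := (isCompact_closedBall c r).exists_isMaxOn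
    ⟨c, Metric.mem_closedBall_self hr.le⟩ hcont
  have hmax' : ∀ z ∈ Metric.closedBall c r,
      ‖u z‖ * (r - dist z c) ≤ ‖u z0‖ * (r - dist z0 c) := fun z hz => hmax hz
  have cauchy : ∀ z s B, 0 < s → Metric.closedBall z s ⊆ Metric.closedBall c r →
      (∀ y ∈ Metric.closedBall z s, ‖u y‖ ≤ B) → ‖deriv u z‖ ≤ B / s := by
    intro z s B hs hss hB
    refine Complex.norm_deriv_le_of_forall_mem_sphere_norm_le hs ?_
      (fun y hy => hB y (Metric.sphere_subset_closedBall hy))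
    apply DifferentiableOn.diffContOnCl
    exact hu.mono ((Metric.closure_ball_subset_closedBall).trans (hss.trans hsub))
  set ρ := r - dist z0 c with hρ
  set A := ‖u z0‖ * ρ with hA
  have hρ0 : 0 ≤ ρ := by
    have := Metric.mem_closedBall.1 hz0
    linarith
  have hρr : ρ ≤ r := by
    have := dist_nonneg (x := z0) (y := c)
    linarith
  have hA0 : 0 ≤ A := by positivity
  have hAle : A ≤ 4 + M * r := by
    rcases hρ0.eq_or_lt with h | h
    · rw [hA, ← h, mul_zero]; positivity
    have h1 : ‖deriv u z0‖ ≤ (2 * A / ρ) / (ρ / 2) := by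
      apply cauchy _ _ _ (by positivity)
      · intro y hy
        rw [Metric.mem_closedBall] at *
        have := dist_triangle y z0 c
        linarith
      · intro y hy
        rw [Metric.mem_closedBall] at hy
        have ht := dist_triangle y z0 c
        have hm := hmax' y (by rw [Metric.mem_closedBall]; linarith)
        rw [le_div_iff₀ h]
        have : ‖u y‖ * (ρ / 2) ≤ ‖u y‖ * (r - dist y c) :=
          mul_le_mul_of_nonneg_left (by linarith) (norm_nonneg _)
        linarith
    have h2 : ‖u z0‖ ^ 2 ≤ ‖deriv u z0‖ + M ^ 2 := by
      have : u z0 ^ 2 = - p z0 - deriv u z0 := by rw [← hric z0 hz0]; ring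
      rw [← norm_pow, this]
      refine (norm_sub_le _ _).trans ?_
      rw [norm_neg]
      linarith [hp z0 hz0]
    have h3 : A ^ 2 ≤ 4 * A + M ^ 2 * r ^ 2 := by
      have e1 : A ^ 2 = ‖u z0‖ ^ 2 * ρ ^ 2 := by rw [hA]; ring
      have e2 : (2 * A / ρ) / (ρ / 2) * ρ ^ 2 = 4 * A := by field_simp; ring
      have e3 : ‖u z0‖ ^ 2 * ρ ^ 2 ≤ ((2 * A / ρ) / (ρ / 2) + M ^ 2) * ρ ^ 2 :=
        mul_le_mul_of_nonneg_right (by linarith) (by positivity)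
      have e4 : M ^ 2 * ρ ^ 2 ≤ M ^ 2 * r ^ 2 := by gcongr
      rw [e1]; nlinarith
    by_contra hcon
    push Not at hcon
    have : 0 ≤ M * r := by positivity
    nlinarith
  have h1 : ‖deriv u c‖ ≤ (2 * A / r) / (r / 2) := by
    apply cauchy _ _ _ (by positivity)
    · exact Metric.closedBall_subset_closedBall (by linarith)
    · intro y hy
      rw [Metric.mem_closedBall] at hy
      have hm := hmax' y (by rw [Metric.mem_closedBall]; linarith)
      rw [le_div_iff₀ hr]
      have : ‖u y‖ * (r / 2) ≤ ‖u y‖ * (r - dist y c) :=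
        mul_le_mul_of_nonneg_left (by linarith) (norm_nonneg _)
      linarith
  refine h1.trans ?_
  have : (2 * A / r) / (r / 2) = 4 * A / r ^ 2 := by field_simp; ring
  rw [this]
  gcongr

lemma consec (w : ℂ → ℂ) (hw : Differentiable ℂ w) (hw0 : w ≠ 0)
    (hzeros : {z : ℂ | w z = 0 ∧ z.im ≠ 0}.Finite)
    (hinf : {z : ℂ | w z = 0}.Infinite) (X : ℝ) :
    ∃ a b : ℝ, a < b ∧ w a = 0 ∧ w b = 0 ∧ (∀ x ∈ Set.Ioo a b, w (x:ℝ) ≠ 0) ∧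
      ∀ x ∈ Set.Icc a b, X < |x| := by
  have hfin : ∀ R : ℝ, {x : ℝ | w x = 0 ∧ |x| ≤ R}.Finite := by
    intro R
    by_contra hcon
    have hcon' : ({x : ℝ | w x = 0 ∧ |x| ≤ R}).Infinite := hcon
    have him := hcon'.image (f := fun x : ℝ => (x : ℂ)) (Complex.ofReal_injective.injOn)
    obtain ⟨z, -, hz⟩ := him.exists_accPt_of_subset_isCompact (isCompact_closedBall (0:ℂ) R)
      (by
        rintro _ ⟨x, hx, rfl⟩
        simpa using hx.2)
    have han : AnalyticOnNhd ℂ w Set.univ := fun z _ => hw.analyticAt z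
    apply hw0
    have := han.eqOn_zero_of_preconnected_of_frequently_eq_zero isPreconnected_univ
      (Set.mem_univ z) (by
        rw [accPt_iff_frequently_nhdsNE] at hz
        refine hz.mono ?_
        rintro _ ⟨x, hx, rfl⟩
        exact hx.1)
    funext y
    exact this (Set.mem_univ y)
  have hS : {x : ℝ | w x = 0}.Infinite := by
    intro hf
    apply hinf
    refine ((hf.image (fun x : ℝ => (x : ℂ))).union hzeros).subset ?_
    intro z hz
    by_cases h : z.im = 0
    · left
      refine ⟨z.re, ?_, ?_⟩
      · have : (z.re : ℂ) = z := by apply Complex.ext <;> simp [h]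
        simpa [this] using hz
      · apply Complex.ext <;> simp [h]
    · exact Or.inr ⟨hz, h⟩
  have key : ∃ a b : ℝ, a < b ∧ w a = 0 ∧ w b = 0 ∧ ∀ x ∈ Set.Icc a b, X < |x| := by
    have h1 : ({x : ℝ | w x = 0 ∧ X < x} ∪ {x : ℝ | w x = 0 ∧ x < -X}).Infinite := by
      refine (hS.sdiff (hfin X)).mono ?_
      rintro x ⟨hx, hx'⟩
      have hx2 : ¬ |x| ≤ X := fun h => hx' ⟨hx, h⟩
      rw [abs_le, not_and_or] at hx2
      rcases hx2 with h | h
      · exact Or.inr ⟨hx, not_le.1 h⟩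
      · exact Or.inl ⟨hx, not_le.1 h⟩
    rcases Set.infinite_union.1 h1 with h | h
    · obtain ⟨a, ha, b, hb, hab⟩ := h.nontrivial.exists_lt
      exact ⟨a, b, hab, ha.1, hb.1, fun x hx => lt_of_lt_of_le (lt_of_lt_of_le ha.2 hx.1)
        (le_abs_self x)⟩
    · obtain ⟨a, ha, b, hb, hab⟩ := h.nontrivial.exists_lt
      refine ⟨a, b, hab, ha.1, hb.1, fun x hx => lt_of_lt_of_le ?_ (neg_le_abs x)⟩
      have := hx.2; have := hb.2; linarith
  obtain ⟨a, b, hab, ha, hb, hX⟩ := key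
  have hT : {x : ℝ | w x = 0 ∧ a < x ∧ x ≤ b}.Finite := by
    refine (hfin (max |a| |b|)).subset ?_
    rintro x ⟨h1, h2, h3⟩
    exact ⟨h1, abs_le_max_abs_abs h2.le h3⟩
  obtain ⟨c, hc, hmin⟩ := hT.exists_minimalFor id _ ⟨b, hb, hab, le_rfl⟩
  refine ⟨a, c, hc.2.1, ha, hc.1, ?_, fun x hx => hX x ⟨hx.1, hx.2.trans hc.2.2⟩⟩
  intro x hx h0
  have := hmin (j := x) ⟨h0, hx.1, hx.2.le.trans hc.2.2⟩ hx.2.le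
  exact absurd hx.2 (not_lt.2 this)

lemma green (w : ℂ → ℂ) (P : Polynomial ℂ) (hw : Differentiable ℂ w)
    (hde : ∀ z : ℂ, iteratedDeriv 2 w z + P.eval z * w z = 0) (z0 v : ℂ) (t : ℝ) :
    HasDerivAt (fun t : ℝ => deriv w (z0 + t * v) * star (w (z0 + t * v)))
      (- v * (P.eval (z0 + t * v) * (‖w (z0 + t * v)‖ ^ 2 : ℝ))
        + star v * (‖deriv w (z0 + t * v)‖ ^ 2 : ℝ)) t := by
  have hline : HasDerivAt (fun s : ℂ => z0 + s * v) v (t : ℂ) := by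
    simpa using ((hasDerivAt_id (t:ℂ)).mul_const v).const_add z0
  have hw1 : HasDerivAt w (deriv w (z0 + t * v)) (z0 + t * v) := (hw _).hasDerivAt
  have hdw : Differentiable ℂ (deriv w) := hw.deriv
  have hw2 : HasDerivAt (deriv w) (- (P.eval (z0 + t * v) * w (z0 + t * v))) (z0 + t * v) := by
    have h := (hdw (z0 + t * v)).hasDerivAt
    have h2 := hde (z0 + t * v)
    rw [iteratedDeriv_succ, iteratedDeriv_one] at h2
    rw [← eq_neg_of_add_eq_zero_left h2]
    exact h
  have h1 := (HasDerivAt.comp (t:ℂ) hw1 hline).comp_ofReal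
  have h2 := (HasDerivAt.comp (t:ℂ) hw2 hline).comp_ofReal
  have h3 := h2.mul h1.star
  refine h3.congr_deriv ?_
  have e : ∀ z : ℂ, ((‖z‖ ^ 2 : ℝ) : ℂ) = z * star z := by
    intro z
    rw [← Complex.normSq_eq_norm_sq]
    exact (Complex.mul_conj z).symm
  simp only [Function.comp, e, star_mul']
  ring

lemma sign_lemma (g q : ℂ) (hg : ‖g ^ 2 - 1‖ ≤ 1 / 4) (hq : ‖q - 1‖ ≤ 1 / 4)
    (h : (g * q).re ≤ 0) : g.re < 0 := by
  by_contra hcon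
  push Not at hcon
  have h1 : ‖g - 1‖ * ‖g + 1‖ ≤ 1 / 4 := by
    rw [← norm_mul]; convert hg using 2; ring
  have h2 : 1 ≤ ‖g + 1‖ := by
    have := Complex.re_le_norm (g + 1)
    simp at this; linarith
  have h3 : ‖g - 1‖ ≤ 1 / 4 := by nlinarith [norm_nonneg (g - 1)]
  have e : g * q = 1 + ((g - 1) + (q - 1) + (g - 1) * (q - 1)) := by ring
  have h4 : ‖(g - 1) + (q - 1) + (g - 1) * (q - 1)‖ ≤ 1/4 + 1/4 + 1/4 * (1/4) := by
    refine (norm_add_le _ _).trans (add_le_add ((norm_add_le _ _).trans (add_le_add h3 hq)) ?_)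
    rw [norm_mul]
    exact mul_le_mul h3 hq (norm_nonneg _) (by norm_num)
  have h5 := (abs_le.1 (Complex.abs_re_le_norm ((g - 1) + (q - 1) + (g - 1) * (q - 1)))).1
  rw [e, Complex.add_re, Complex.one_re] at h
  linarith

lemma exists_eta (k d : ℕ) : ∃ η : ℝ, 0 < η ∧ η ≤ 1 ∧ ∀ s : ℝ, |s| ≤ η →
    ‖(1 + s * I) ^ k - 1‖ ≤ 1 / 4 ∧ ‖(1 + s * I) ^ d - 1‖ ≤ 1 / 4 := by
  have h : ∀ n : ℕ, ∀ᶠ s : ℝ in nhds 0, ‖(1 + s * I) ^ n - 1‖ < 1 / 4 := by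
    intro n
    have hc : Continuous fun s : ℝ => ‖(1 + s * I) ^ n - 1‖ := by fun_prop
    apply hc.continuousAt.eventually_lt continuousAt_const
    simp
  obtain ⟨ε, hε, hh⟩ := Metric.eventually_nhds_iff.1 ((h k).and (h d))
  refine ⟨min (ε / 2) 1, by positivity, min_le_right _ _, fun s hs => ?_⟩
  have := hh (y := s) (by
    rw [Real.dist_eq, sub_zero]
    have := min_le_left (ε / 2) 1
    linarith)
  exact ⟨this.1.le, this.2.le⟩

lemma green_re (w : ℂ → ℂ) (P : Polynomial ℂ) (hw : Differentiable ℂ w)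
    (hde : ∀ z : ℂ, iteratedDeriv 2 w z + P.eval z * w z = 0) (t : ℝ) :
    HasDerivAt (fun t : ℝ => (deriv w t * star (w t)).re)
      (- ((P.eval (t:ℂ)).re * ‖w t‖ ^ 2) + ‖deriv w t‖ ^ 2) t := by
  have h := green w P hw hde 0 1 t
  have h2 := Complex.reCLM.hasFDerivAt.comp_hasDerivAt t h
  simp only [zero_add, mul_one, star_one, one_mul] at h2
  refine h2.congr_deriv ?_
  simp only [Complex.reCLM_apply, Complex.add_re, neg_mul, one_mul, Complex.neg_re,
    Complex.re_mul_ofReal, Complex.ofReal_re]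

lemma green_im (w : ℂ → ℂ) (P : Polynomial ℂ) (hw : Differentiable ℂ w)
    (hde : ∀ z : ℂ, iteratedDeriv 2 w z + P.eval z * w z = 0) (t : ℝ) :
    HasDerivAt (fun t : ℝ => (deriv w t * star (w t)).im)
      (- ((P.eval (t:ℂ)).im * ‖w t‖ ^ 2)) t := by
  have h := green w P hw hde 0 1 t
  have h2 := Complex.imCLM.hasFDerivAt.comp_hasDerivAt t h
  simp only [zero_add, mul_one, star_one, one_mul] at h2
  refine h2.congr_deriv ?_
  simp only [Complex.imCLM_apply, Complex.add_im, neg_mul, one_mul, Complex.neg_im,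
    Complex.im_mul_ofReal, Complex.ofReal_im, add_zero]

lemma green_vert (w : ℂ → ℂ) (P : Polynomial ℂ) (hw : Differentiable ℂ w)
    (hde : ∀ z : ℂ, iteratedDeriv 2 w z + P.eval z * w z = 0) (x : ℝ) (t : ℝ) :
    HasDerivAt (fun t : ℝ => (deriv w (x + t * I) * star (w (x + t * I))).im)
      (- ((P.eval (x + t * I : ℂ)).re * ‖w (x + t * I)‖ ^ 2) - ‖deriv w (x + t * I)‖ ^ 2) t := by
  have h := green w P hw hde x I t
  have h2 := Complex.imCLM.hasFDerivAt.comp_hasDerivAt t h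
  refine h2.congr_deriv ?_
  have e : (star I : ℂ) = - I := Complex.conj_I
  rw [e]
  simp only [Complex.imCLM_apply, Complex.add_im, neg_mul, Complex.neg_im,
    Complex.I_mul_im, Complex.re_mul_ofReal, Complex.ofReal_re]
  ring

lemma real_P (P : Polynomial ℂ) (hd : P.natDegree % 4 = 2)
    (w : ℂ → ℂ) (hw : Differentiable ℂ w) (hw0 : w ≠ 0)
    (hde : ∀ z : ℂ, iteratedDeriv 2 w z + P.eval z * w z = 0)
    (hzeros : {z : ℂ | w z = 0 ∧ z.im ≠ 0}.Finite)
    (hinf : {z : ℂ | w z = 0}.Infinite) :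
    (∃ a : ℝ, 0 < a ∧ P.leadingCoeff = a) ∧
      ∀ x : ℝ, (deriv w x * star (w x)).im = 0 := by
  have hcons := consec w hw hw0 hzeros hinf
  have him : ∀ X : ℝ, ∃ x : ℝ, X < |x| ∧ (P.eval (x:ℂ)).im = 0 := by
    intro X
    obtain ⟨a, b, hab, ha, hb, hne, hX⟩ := hcons X
    obtain ⟨c, hc, hc0⟩ := exists_hasDerivAt_eq_zero hab
      (HasDerivAt.continuousOn fun x _ => green_im w P hw hde x)
      (by simp [ha, hb]) (fun x _ => green_im w P hw hde x)
    refine ⟨c, hX c (Set.Ioo_subset_Icc_self hc), ?_⟩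
    have := hne c hc
    simpa [this] using hc0
  have hre : ∀ X : ℝ, ∃ x : ℝ, X < |x| ∧ 0 ≤ (P.eval (x:ℂ)).re := by
    intro X
    obtain ⟨a, b, hab, ha, hb, hne, hX⟩ := hcons X
    obtain ⟨c, hc, hc0⟩ := exists_hasDerivAt_eq_zero hab
      (HasDerivAt.continuousOn fun x _ => green_re w P hw hde x)
      (by simp [ha, hb]) (fun x _ => green_re w P hw hde x)
    refine ⟨c, hX c (Set.Ioo_subset_Icc_self hc), ?_⟩
    have h1 : 0 < ‖w c‖ ^ 2 := by have := norm_pos_iff.2 (hne c hc); positivity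
    have h2 : 0 ≤ ‖deriv w c‖ ^ 2 := by positivity
    by_contra hcon
    push Not at hcon
    nlinarith
  have hconj : ∀ x : ℝ, (P.map (starRingEnd ℂ)).eval (x:ℂ) = starRingEnd ℂ (P.eval (x:ℂ)) := by
    intro x
    rw [Polynomial.eval_map, ← Polynomial.eval₂_at_apply, Complex.conj_ofReal]
  have hPP : P.map (starRingEnd ℂ) = P := by
    apply Polynomial.eq_of_infinite_eval_eq
    intro hf
    have hb := hf.isBounded
    obtain ⟨R, hR⟩ := hb.exists_norm_le
    obtain ⟨x, hx, hx0⟩ := him R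
    have := hR (x:ℂ) (by
      change (P.map (starRingEnd ℂ)).eval (x:ℂ) = P.eval (x:ℂ)
      rw [hconj]
      exact Complex.conj_eq_iff_im.2 hx0)
    rw [Complex.norm_real, Real.norm_eq_abs] at this
    linarith
  have hreal : ∀ x : ℝ, (P.eval (x:ℂ)).im = 0 := by
    intro x
    have := hconj x
    rw [hPP] at this
    exact Complex.conj_eq_iff_im.1 this.symm
  refine ⟨?_, ?_⟩
  · have hl : starRingEnd ℂ P.leadingCoeff = P.leadingCoeff := by
      conv_rhs => rw [← hPP]
      rw [Polynomial.leadingCoeff_map]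
    obtain ⟨a, ha⟩ := Complex.conj_eq_iff_real.1 hl
    refine ⟨a, ?_, ha⟩
    have hane : a ≠ 0 := by
      rintro rfl
      have : P = 0 := Polynomial.leadingCoeff_eq_zero.1 (by simpa using ha)
      simp [this] at hd
    obtain ⟨C, hC0, hC⟩ := poly_bound P (by omega)
    by_contra hcon
    have haneg : a < 0 := lt_of_le_of_ne (not_lt.1 hcon) hane
    obtain ⟨x, hx, hx0⟩ := hre (max 1 (C / (-a)))
    have hx1 : 1 < |x| := lt_of_le_of_lt (le_max_left _ _) hx
    have hx2 : C / (-a) < |x| := lt_of_le_of_lt (le_max_right _ _) hx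
    rw [div_lt_iff₀ (by linarith)] at hx2
    have h1 := hC x (by rw [Complex.norm_real, Real.norm_eq_abs]; exact hx1.le)
    rw [ha, Complex.norm_real, Real.norm_eq_abs] at h1
    have h2 := (Complex.re_le_norm _).trans h1
    have e : ((a:ℂ) * (x:ℂ) ^ P.natDegree).re = a * |x| ^ P.natDegree := by
      have hev : Even P.natDegree := by rw [Nat.even_iff]; omega
      rw [hev.pow_abs]
      norm_cast
    rw [Complex.sub_re, e] at h2
    obtain ⟨n, hn⟩ : ∃ n, P.natDegree = n + 1 := ⟨P.natDegree - 1, by omega⟩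
    rw [hn] at h2
    simp only [Nat.add_sub_cancel, pow_succ] at h2
    have h3 : 0 < |x| ^ n := by positivity
    nlinarith
  · intro x
    obtain ⟨a, b, hab, ha, hb, hne, hX⟩ := hcons 0
    have := is_const_of_deriv_eq_zero (f := fun t : ℝ => (deriv w t * star (w t)).im)
      (fun t => (green_im w P hw hde t).differentiableAt)
      (fun t => by rw [(green_im w P hw hde t).deriv, hreal]; simp) x a
    simpa [ha] using this

lemma vert_sign (w : ℂ → ℂ) (P : Polynomial ℂ) (hw : Differentiable ℂ w)
    (hde : ∀ z : ℂ, iteratedDeriv 2 w z + P.eval z * w z = 0)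
    (hr : ∀ x : ℝ, (deriv w x * star (w x)).im = 0) (x y : ℝ) (hy : 0 ≤ y)
    (hP : ∀ t ∈ Set.Icc 0 y, 0 ≤ (P.eval (x + t * I : ℂ)).re) :
    (deriv w (x + y * I) / w (x + y * I)).im ≤ 0 := by
  have hanti : AntitoneOn (fun t : ℝ => (deriv w (x + t * I) * star (w (x + t * I))).im)
      (Set.Icc 0 y) := by
    apply antitoneOn_of_hasDerivWithinAt_nonpos (convex_Icc 0 y)
      (HasDerivAt.continuousOn fun t _ => green_vert w P hw hde x t)
      (fun t _ => (green_vert w P hw hde x t).hasDerivWithinAt)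
    intro t ht
    have h1 := hP t (interior_subset ht)
    have h2 : 0 ≤ (P.eval (x + t * I : ℂ)).re * ‖w (x + t * I)‖ ^ 2 := by positivity
    have h3 : 0 ≤ ‖deriv w (x + t * I)‖ ^ 2 := by positivity
    linarith
  have h := hanti (Set.left_mem_Icc.2 hy) (Set.right_mem_Icc.2 hy) hy
  simp only [Complex.ofReal_zero, zero_mul, add_zero, hr] at h
  have e : deriv w (x + y * I) / w (x + y * I) =
      (deriv w (x + y * I) * star (w (x + y * I))) * ((Complex.normSq (w (x + y * I)))⁻¹ : ℝ) := by
    rw [div_eq_mul_inv, Complex.inv_def, mul_assoc]; rfl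
  rw [e, Complex.im_mul_ofReal]
  exact mul_nonpos_of_nonpos_of_nonneg h (inv_nonneg.2 (Complex.normSq_nonneg _))

/-- The asymptotic relation `u ^ 2 ≈ - a z ^ d` on a horizontal segment of height `R η`. -/
lemma mid (P : Polynomial ℂ) (k : ℕ) (hk : 1 ≤ k) (hd : P.natDegree = 2 * k)
    (w : ℂ → ℂ) (hw : Differentiable ℂ w)
    (hde : ∀ z : ℂ, iteratedDeriv 2 w z + P.eval z * w z = 0)
    (R0 : ℝ) (hR0 : ∀ z : ℂ, R0 < z.im → w z ≠ 0)
    (a : ℝ) (ha : 0 < a) (hlead : P.leadingCoeff = a) (η : ℝ) (hη : 0 < η) (hη1 : η ≤ 1) :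
    ∃ R1 : ℝ, ∀ R : ℝ, R1 ≤ R → ∀ t : ℝ, |t| ≤ 1 →
      ‖(deriv w (R * (t + η * I)) / w (R * (t + η * I))) ^ 2 + a * (R * (t + η * I)) ^ (2 * k)‖
        ≤ 1 / 4 * ‖(a:ℂ) * (R * (t + η * I)) ^ (2 * k)‖ := by
  obtain ⟨C, hC0, hC⟩ := poly_bound P (by omega)
  rw [hd, hlead] at hC
  set u : ℂ → ℂ := fun z => deriv w z / w z with hu
  have hud : DifferentiableOn ℂ u {z : ℂ | R0 < z.im} := by
    intro z hz
    exact ((hw.deriv z).div (hw z) (hR0 z hz)).differentiableWithinAt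
  have hric : ∀ z : ℂ, R0 < z.im → deriv u z + u z ^ 2 = - P.eval z := by
    intro z hz
    have hz0 := hR0 z hz
    have h1 : deriv u z = (deriv (deriv w) z * w z - deriv w z * deriv w z) / w z ^ 2 :=
      deriv_fun_div (hw.deriv z) (hw z) hz0
    have h2 := hde z
    rw [iteratedDeriv_succ, iteratedDeriv_one] at h2
    rw [h1, eq_neg_of_add_eq_zero_left h2, hu]
    field_simp
    ring
  set D : ℝ := (a + C + 1) * 3 ^ k with hD
  set E : ℝ := 64 + 8 * D / η + C * 3 ^ (2 * k) with hE
  refine ⟨max (max 1 (2 / η)) (max (2 * (|R0| + 1) / η) (4 * E / (a * η ^ (2 * k)))),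
    fun R hR t ht => ?_⟩
  simp only [max_le_iff] at hR
  obtain ⟨⟨hR1, hR2⟩, hR3, hR4⟩ := hR
  rw [div_le_iff₀ (by positivity)] at hR2 hR3 hR4
  have hRpos : 0 < R := by linarith
  set z : ℂ := R * (t + η * I) with hz
  have hzim : z.im = R * η := by simp [hz]
  have hzn : ‖z‖ ≤ 2 * R := by
    rw [hz, norm_mul, Complex.norm_real, Real.norm_eq_abs, abs_of_pos hRpos]
    have : ‖(t + η * I : ℂ)‖ ≤ 1 + 1 := by
      refine (norm_add_le _ _).trans (add_le_add (by simpa using ht) ?_)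
      simpa [abs_of_pos hη] using hη1
    nlinarith
  set r : ℝ := R * η / 2 with hr
  have hr1 : 1 ≤ r := by linarith
  have hball : ∀ y ∈ Metric.closedBall z r, R0 < y.im ∧ 1 ≤ ‖y‖ ∧ ‖y‖ ≤ 3 * R := by
    intro y hy
    rw [Metric.mem_closedBall, dist_eq_norm] at hy
    have h1 := (abs_le.1 ((Complex.abs_im_le_norm (y - z)).trans hy)).1
    rw [Complex.sub_im, hzim] at h1
    have h2 : r ≤ y.im := by linarith
    refine ⟨?_, ?_, ?_⟩
    · have := le_abs_self R0
      linarith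
    · have := Complex.im_le_norm y
      linarith
    · have := norm_le_norm_add_norm_sub' y z
      nlinarith
  have hPb : ∀ y ∈ Metric.closedBall z r, ‖P.eval y‖ ≤ (D * R ^ k) ^ 2 := by
    intro y hy
    obtain ⟨-, h1, h3⟩ := hball y hy
    have hh := hC y h1
    have h4 : ‖P.eval y‖ ≤ C * ‖y‖ ^ (2 * k - 1) + a * ‖y‖ ^ (2 * k) := by
      have : P.eval y = (P.eval y - a * y ^ (2 * k)) + a * y ^ (2 * k) := by ring
      rw [this]
      refine (norm_add_le _ _).trans (add_le_add hh ?_)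
      rw [norm_mul, norm_pow, Complex.norm_real, Real.norm_eq_abs, abs_of_pos ha]
    have h5 : ‖y‖ ^ (2 * k - 1) ≤ ‖y‖ ^ (2 * k) := pow_le_pow_right₀ h1 (by omega)
    have h6 : ‖y‖ ^ (2 * k) ≤ (3 * R) ^ (2 * k) := by gcongr
    have h7 : (D * R ^ k) ^ 2 = (a + C + 1) ^ 2 * (3 * R) ^ (2 * k) := by
      rw [hD]; ring
    rw [h7]
    have h8 : 0 ≤ (3 * R) ^ (2 * k) := by positivity
    calc ‖P.eval y‖ ≤ (a + C) * (3 * R) ^ (2 * k) := by nlinarith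
      _ ≤ _ := by gcongr; nlinarith
  have hD0 : 0 ≤ D := by positivity
  have hder := riccati_bound u (fun y => P.eval y) _ z r (D * R ^ k) (by linarith)
    (by positivity) (fun y hy => (hball y hy).1) hud (fun y hy => hric y (hball y hy).1) hPb
  have hzb := hball z (Metric.mem_closedBall_self (by linarith))
  have hRp1 : 1 ≤ R ^ (2 * k - 1) := one_le_pow₀ hR1
  have hder2 : ‖deriv u z‖ ≤ (64 + 8 * D / η) * R ^ (2 * k - 1) := by
    have hr0 : 0 < r := by linarith
    have e1 : 4 * (4 + D * R ^ k * r) / r ^ 2 = 16 / r ^ 2 + 8 * D / η * R ^ (k - 1) := by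
      obtain ⟨n, rfl⟩ : ∃ n, k = n + 1 := ⟨k - 1, by omega⟩
      rw [hr]
      simp only [Nat.add_sub_cancel, pow_succ]
      field_simp
      ring
    have e2 : 16 / r ^ 2 ≤ 64 := by
      rw [div_le_iff₀ (by positivity)]
      nlinarith
    have e3 : R ^ (k - 1) ≤ R ^ (2 * k - 1) := pow_le_pow_right₀ hR1 (by omega)
    have e4 : 8 * D / η * R ^ (k - 1) ≤ 8 * D / η * R ^ (2 * k - 1) := by gcongr
    rw [e1] at hder
    nlinarith
  have hPz : ‖P.eval z - a * z ^ (2 * k)‖ ≤ C * 3 ^ (2 * k) * R ^ (2 * k - 1) := by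
    refine (hC z hzb.2.1).trans ?_
    rw [mul_assoc]
    gcongr
    calc ‖z‖ ^ (2 * k - 1) ≤ (3 * R) ^ (2 * k - 1) := by gcongr; exact hzb.2.2
      _ = 3 ^ (2 * k - 1) * R ^ (2 * k - 1) := mul_pow _ _ _
      _ ≤ _ := by gcongr <;> norm_num
  have htot : ‖u z ^ 2 + a * z ^ (2 * k)‖ ≤ E * R ^ (2 * k - 1) := by
    have : u z ^ 2 + a * z ^ (2 * k) = - deriv u z - (P.eval z - a * z ^ (2 * k)) := by
      have := hric z hzb.1
      linear_combination this
    rw [this]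
    refine (norm_sub_le _ _).trans ?_
    rw [norm_neg, hE]
    linarith
  refine htot.trans ?_
  rw [norm_mul, norm_pow, Complex.norm_real, Real.norm_eq_abs, abs_of_pos ha]
  have h1 : R * η ≤ ‖z‖ := by rw [← hzim]; exact Complex.im_le_norm z
  have h2 : (R * η) ^ (2 * k) ≤ ‖z‖ ^ (2 * k) := by gcongr
  have h3 : (R * η) ^ (2 * k) = R * η ^ (2 * k) * R ^ (2 * k - 1) := by
    obtain ⟨n, hn⟩ : ∃ n, 2 * k = n + 1 := ⟨2 * k - 1, by omega⟩
    rw [hn]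
    simp only [Nat.add_sub_cancel]
    ring
  rw [h3] at h2
  have h4 : 4 * E * R ^ (2 * k - 1) ≤ R * (a * η ^ (2 * k)) * R ^ (2 * k - 1) := by gcongr
  nlinarith

lemma end_sign (P : Polynomial ℂ) (k : ℕ) (hk : 1 ≤ k) (hd : P.natDegree = 2 * k)
    (a : ℝ) (ha : 0 < a) (hlead : P.leadingCoeff = a) (η : ℝ) (hη1 : η ≤ 1)
    (hη2 : ∀ s : ℝ, |s| ≤ η → ‖(1 + s * I) ^ (2 * k) - 1‖ ≤ 1 / 4) :
    ∃ R1 : ℝ, ∀ R : ℝ, R1 ≤ R → ∀ x : ℝ, |x| = R → ∀ t ∈ Set.Icc 0 (R * η),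
      0 ≤ (P.eval (x + t * I : ℂ)).re := by
  obtain ⟨C, hC0, hC⟩ := poly_bound P (by omega)
  rw [hd, hlead] at hC
  refine ⟨max 1 (2 * (C * 2 ^ (2 * k)) / a), fun R hR x hx t ht => ?_⟩
  simp only [max_le_iff] at hR
  obtain ⟨hR1, hR2⟩ := hR
  rw [div_le_iff₀ ha] at hR2
  have hRpos : 0 < R := by linarith
  have hx0 : x ≠ 0 := by rintro rfl; simp at hx; linarith
  set z : ℂ := x + t * I with hz
  have hz1 : z = x * (1 + (t / x : ℝ) * I) := by
    rw [hz]; push_cast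
    have : (x:ℂ) ≠ 0 := by exact_mod_cast hx0
    field_simp
  have hs : |t / x| ≤ η := by
    rw [abs_div, hx, abs_of_nonneg ht.1, div_le_iff₀ hRpos]; linarith [ht.2]
  have hzn1 : R ≤ ‖z‖ := by
    have := Complex.abs_re_le_norm z
    simpa [hz, hx] using this
  have hzn2 : ‖z‖ ≤ 2 * R := by
    have h1 : ‖z‖ ≤ ‖(x:ℂ)‖ + ‖(t:ℂ) * I‖ := norm_add_le _ _
    simp only [norm_mul, Complex.norm_real, Real.norm_eq_abs, hx, Complex.norm_I, mul_one,
      abs_of_nonneg ht.1] at h1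
    have := ht.2
    nlinarith
  have h1 := hC z (by linarith)
  have h2 : ‖z‖ ^ (2 * k - 1) ≤ 2 ^ (2 * k) * R ^ (2 * k - 1) := by
    calc ‖z‖ ^ (2 * k - 1) ≤ (2 * R) ^ (2 * k - 1) := by gcongr
      _ = 2 ^ (2 * k - 1) * R ^ (2 * k - 1) := mul_pow _ _ _
      _ ≤ _ := by gcongr <;> norm_num
  have h3 : (a * z ^ (2 * k)).re = a * R ^ (2 * k) * ((1 + (t / x : ℝ) * I) ^ (2 * k)).re := by
    have : (a * z ^ (2 * k)) = ((a * R ^ (2 * k) : ℝ) : ℂ) * (1 + (t / x : ℝ) * I) ^ (2 * k) := by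
      rw [hz1, mul_pow, ← hx, Even.pow_abs ⟨k, by ring⟩]
      push_cast
      ring
    rw [this, Complex.re_ofReal_mul]
  have h4 : 3 / 4 ≤ ((1 + (t / x : ℝ) * I) ^ (2 * k)).re := by
    have := (abs_le.1 ((Complex.abs_re_le_norm _).trans (hη2 _ hs))).1
    rw [Complex.sub_re, Complex.one_re] at this
    linarith
  have h5 := (abs_le.1 ((Complex.abs_re_le_norm _).trans h1)).1
  rw [Complex.sub_re, h3] at h5
  have h6 : a * R ^ (2 * k) = R * a * R ^ (2 * k - 1) := by
    obtain ⟨n, hn⟩ : ∃ n, 2 * k = n + 1 := ⟨2 * k - 1, by omega⟩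
    rw [hn]
    simp only [Nat.add_sub_cancel]
    ring
  have h7 : 2 * (C * 2 ^ (2 * k)) * R ^ (2 * k - 1) ≤ R * a * R ^ (2 * k - 1) := by gcongr
  have h8 : C * ‖z‖ ^ (2 * k - 1) ≤ C * (2 ^ (2 * k) * R ^ (2 * k - 1)) := by gcongr
  have h9 : 0 ≤ a * R ^ (2 * k) := by positivity
  have h10 : a * R ^ (2 * k) * (3 / 4) ≤
      a * R ^ (2 * k) * ((1 + (t / x : ℝ) * I) ^ (2 * k)).re := by gcongr
  linarith

/-- If `P` is a polynomial of degree `d ≡ 2 (mod 4)` and `w` is a nonzero entire solution of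
`w'' + P·w = 0` with all but finitely many zeros real, then `w` has only finitely many
zeros. -/
theorem stmt_7 (P : Polynomial ℂ) (hP : P.natDegree % 4 = 2)
    (w : ℂ → ℂ) (hw : Differentiable ℂ w) (hw0 : w ≠ 0)
    (hde : ∀ z : ℂ, iteratedDeriv 2 w z + P.eval z * w z = 0)
    (hzeros : {z : ℂ | w z = 0 ∧ z.im ≠ 0}.Finite) :
    {z : ℂ | w z = 0}.Finite := by
  by_contra hcon
  obtain ⟨⟨a, ha, hlead⟩, hreal⟩ := real_P P hP w hw hw0 hde hzeros hcon
  obtain ⟨k, hd, hkodd⟩ : ∃ k, P.natDegree = 2 * k ∧ Odd k :=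
    ⟨P.natDegree / 2, by omega, by rw [Nat.odd_iff]; omega⟩
  have hk : 1 ≤ k := by omega
  obtain ⟨R0, hR0⟩ : ∃ R0 : ℝ, ∀ z : ℂ, R0 < z.im → w z ≠ 0 := by
    obtain ⟨R, hR⟩ := hzeros.isBounded.exists_norm_le
    refine ⟨max R 0, fun z hz h0 => ?_⟩
    have h1 := (le_max_left R 0).trans_lt hz
    have h2 := (le_max_right R 0).trans_lt hz
    have := hR z ⟨h0, h2.ne'⟩
    have := Complex.im_le_norm z
    linarith
  obtain ⟨η, hη, hη1, hηs⟩ := exists_eta k (2 * k)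
  obtain ⟨R1, hR1⟩ := mid P k hk hd w hw hde R0 hR0 a ha hlead η hη hη1
  obtain ⟨R2, hR2⟩ := end_sign P k hk hd a ha hlead η hη1 (fun s hs => (hηs s hs).2)
  obtain ⟨R, hRR⟩ : ∃ R : ℝ, R1 ≤ R ∧ R2 ≤ R ∧ 1 ≤ R ∧ (|R0| + 1) / η ≤ R :=
    ⟨max (max R1 R2) (max 1 ((|R0| + 1) / η)), by simp, by simp, by simp, by simp⟩
  obtain ⟨h1, h2, h3, h4⟩ := hRR
  rw [div_le_iff₀ hη] at h4
  have hRpos : 0 < R := by linarith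
  set b : ℝ := Real.sqrt a with hb
  have hb0 : 0 < b := Real.sqrt_pos.2 ha
  have hb2 : (b:ℂ) ^ 2 = a := by exact_mod_cast Real.sq_sqrt ha.le
  set z : ℝ → ℂ := fun t => R * (t + η * I) with hz
  have hzim : ∀ t, (z t).im = R * η := by intro t; simp [hz]
  have hz0 : ∀ t, z t ≠ 0 := by
    intro t h
    have := hzim t
    rw [h, Complex.zero_im] at this
    have h5 : 0 < R * η := by positivity
    linarith
  have hwz : ∀ t, w (z t) ≠ 0 := by
    intro t
    apply hR0
    rw [hzim]
    have := le_abs_self R0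
    linarith
  set den : ℝ → ℂ := fun t => I * b * z t ^ k with hden
  have hbC : (b:ℂ) ≠ 0 := by exact_mod_cast hb0.ne'
  have hden0 : ∀ t, den t ≠ 0 := fun t =>
    mul_ne_zero (mul_ne_zero Complex.I_ne_zero hbC) (pow_ne_zero _ (hz0 t))
  have hden2 : ∀ t, den t ^ 2 = - (a * z t ^ (2 * k)) := by
    intro t
    simp only [hden]
    rw [mul_pow, mul_pow, Complex.I_sq, hb2]
    ring
  set g : ℝ → ℂ := fun t => (deriv w (z t) / w (z t)) / den t with hg
  have hgd : ∀ t, deriv w (z t) / w (z t) = g t * den t := fun t =>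
    (div_mul_cancel₀ _ (hden0 t)).symm
  have hgb : ∀ t : ℝ, |t| ≤ 1 → ‖g t ^ 2 - 1‖ ≤ 1 / 4 := by
    intro t ht
    have h := hR1 R h1 t ht
    have hpos : 0 < ‖(a:ℂ) * z t ^ (2 * k)‖ := by
      rw [norm_pos_iff, ← neg_ne_zero, ← hden2]
      exact pow_ne_zero _ (hden0 t)
    have e : (deriv w (z t) / w (z t)) ^ 2 + a * z t ^ (2 * k)
        = - (g t ^ 2 - 1) * (a * z t ^ (2 * k)) := by
      rw [hgd, mul_pow, hden2]; ring
    change ‖(deriv w (z t) / w (z t)) ^ 2 + a * z t ^ (2 * k)‖ ≤ _ at h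
    rw [e, norm_mul, norm_neg] at h
    exact le_of_mul_le_mul_right h hpos
  have hcont : Continuous fun t => (g t).re := by
    have hzc : Continuous z := by fun_prop
    have hw' : Continuous (deriv w) := hw.deriv.continuous
    have hwc := hw.continuous
    have : Continuous g := by
      apply Continuous.div _ (by fun_prop) hden0
      exact (hw'.comp hzc).div (hwc.comp hzc) hwz
    exact Complex.continuous_re.comp this
  have hendz : ∀ x : ℝ, |x| = R → (deriv w (x + (R * η : ℝ) * I) / w (x + (R * η : ℝ) * I)).im ≤ 0 :=
    fun x hx => vert_sign w P hw hde hreal x (R * η) (by positivity)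
      (hR2 R h2 x hx)
  have hneg : (g 1).re < 0 := by
    have e : z 1 = (R:ℝ) + (R * η : ℝ) * I := by simp only [hz]; push_cast; ring
    have h := hendz R (abs_of_pos hRpos)
    rw [← e, hgd] at h
    refine sign_lemma (g 1) ((1 + η * I) ^ k) (hgb 1 (by simp)) (hηs η (abs_of_pos hη).le).1 ?_
    have e2 : g 1 * den 1 = ((b * R ^ k : ℝ) : ℂ) * (I * (g 1 * (1 + η * I) ^ k)) := by
      simp only [hden, hz]; push_cast; rw [mul_pow]; ring
    rw [e2, Complex.im_ofReal_mul, Complex.I_mul_im] at h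
    have : 0 < b * R ^ k := by positivity
    by_contra hc
    push Not at hc
    nlinarith
  have hpos : 0 < (g (-1)).re := by
    have e : z (-1) = (-R:ℝ) + (R * η : ℝ) * I := by simp only [hz]; push_cast; ring
    have h := hendz (-R) (by rw [abs_neg, abs_of_pos hRpos])
    rw [← e, hgd] at h
    have := sign_lemma (-g (-1)) ((1 + (-η : ℝ) * I) ^ k)
      (by rw [neg_sq]; exact hgb (-1) (by simp))
      (hηs (-η) (by rw [abs_neg, abs_of_pos hη])).1 ?_
    · rw [Complex.neg_re] at this; linarith
    have e3 : (((-1 : ℝ) : ℂ) + η * I) ^ k = - (1 + (-η : ℝ) * I) ^ k := by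
      rw [← hkodd.neg_pow]; congr 1; push_cast; ring
    have e2 : g (-1) * den (-1) =
        ((b * R ^ k : ℝ) : ℂ) * (I * (- g (-1) * (1 + (-η : ℝ) * I) ^ k)) := by
      simp only [hden, hz]; rw [mul_pow, e3]; push_cast; ring
    rw [e2, Complex.im_ofReal_mul, Complex.I_mul_im] at h
    have : 0 < b * R ^ k := by positivity
    by_contra hc
    push Not at hc
    nlinarith
  obtain ⟨t, ht, ht0⟩ := intermediate_value_Icc' (by norm_num : (-1:ℝ) ≤ 1) hcont.continuousOn
    (show (0:ℝ) ∈ Set.Icc (g 1).re (g (-1)).re from ⟨hneg.le, hpos.le⟩)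
  have hb1 := hgb t (abs_le.2 ht)
  have hb3 := (abs_le.1 ((Complex.abs_re_le_norm _).trans hb1)).1
  simp only at ht0
  rw [Complex.sub_re, sq, Complex.mul_re, ht0, Complex.one_re] at hb3
  nlinarith [mul_self_nonneg (g t).im]
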